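/- arXiv:2108.12946 — 2 statements merged into one kernel-verified Lean document; each statement's English description precedes it below -/
import Mathlib

section
/- There exists a simple graph G on 11 vertices such that neither G nor the complement of G has a K6 minor. -/
/-!
The graph is `G = K₂ + P₉²`, the join of an edge with the square of the path `0, 1, …, 8`
(vertices at distance at most two along the path are adjacent); vertices `9` and `10` form the `K₂`.

`G` has no `K₆` minor because it has treewidth `4`, and the argument used is the corresponding
elimination argument. Given six branch sets, let `m` be the smallest among their largest elements.
Each of the other five branch sets has an element above `m`, and is either adjacent to the first one
or crosses the level `m` by an edge, so it contains one of the four vertices `m + 1`, `m + 2`, `9`,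
`10`. Five disjoint sets cannot do so.

In `Gᶜ` the vertices `9` and `10` are isolated, and two vertices of `{0, …, 8}` are adjacent iff they
differ by at least three. Six branch sets live in these nine vertices. A singleton branch set is a
vertex of degree at least `5`, hence one of `0`, `1`, `7`, `8`; since `0, 1` are nonadjacent and so
are `7, 8`, at most two branch sets are singletons. Hence at least `2 * 1 + 4 * 2 = 10` vertices are
needed, a contradiction.
-/

open SimpleGraph

/-- `H` is a minor of `G`: there is a family of pairwise disjoint nonempty branch sets of
vertices of `G`, indexed by the vertices of `H`, each inducing a connected subgraph of `G`,
such that adjacent vertices of `H` have an edge of `G` between their branch sets. -/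
def IsMinorOf {W V : Type*} (H : SimpleGraph W) (G : SimpleGraph V) : Prop :=
  ∃ B : W → Set V,
    (∀ w, (B w).Nonempty) ∧
    (Pairwise fun w₁ w₂ => Disjoint (B w₁) (B w₂)) ∧
    (∀ w, (G.induce (B w)).Connected) ∧
    (∀ w₁ w₂, H.Adj w₁ w₂ → ∃ v₁ ∈ B w₁, ∃ v₂ ∈ B w₂, G.Adj v₁ v₂)

/-- The result of a ∇Y-move on the triangle `a b c` of `G`: the three edges of the
triangle are deleted, and a new vertex (`none`) is joined to `a`, `b`, `c`. -/
def deltaYMove {V : Type*} (G : SimpleGraph V) (a b c : V) : SimpleGraph (Option V) :=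
  SimpleGraph.fromRel fun x y =>
    (∃ u v : V, x = some u ∧ y = some v ∧ G.Adj u v ∧
      ¬ (u ∈ ({a, b, c} : Set V) ∧ v ∈ ({a, b, c} : Set V))) ∨
    (x = none ∧ (y = some a ∨ y = some b ∨ y = some c))

/-- A (finite) graph presented with vertex set `Fin n`. -/
def FinGraph := Σ n : ℕ, SimpleGraph (Fin n)

/-- `q` is obtained from `p` by a ∇Y-move (up to isomorphism). -/
def DeltaYStep (p q : FinGraph) : Prop :=
  ∃ a b c : Fin p.1, p.2.Adj a b ∧ p.2.Adj b c ∧ p.2.Adj a c ∧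
    Nonempty (q.2 ≃g deltaYMove p.2 a b c)

/-- `q` is obtained from `p` by a ∇Y-move or by a Y∇-move. -/
def PetersenStep (p q : FinGraph) : Prop := DeltaYStep p q ∨ DeltaYStep q p

/-- The Petersen family: all graphs obtained from `K₆` by ∇Y- and Y∇-moves. -/
def InPetersenFamily (p : FinGraph) : Prop :=
  Relation.ReflTransGen PetersenStep ⟨6, ⊤⟩ p

/-- A graph is intrinsically linked iff it has a minor in the Petersen family
(Robertson–Seymour–Thomas characterization, taken as the definition). -/
def IsIL {V : Type*} (G : SimpleGraph V) : Prop :=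
  ∃ p : FinGraph, InPetersenFamily p ∧ IsMinorOf p.2 G

/-- A graph is linklessly embeddable (nIL) iff it is not intrinsically linked. -/
def IsNIL {V : Type*} (G : SimpleGraph V) : Prop := ¬ IsIL G

/-- A nIL graph is maxnIL if adding any edge between nonadjacent vertices yields
an IL graph. -/
def MaxNIL {V : Type*} (G : SimpleGraph V) : Prop :=
  IsNIL G ∧ ∀ v w : V, v ≠ w → ¬ G.Adj v w →
    IsIL (G ⊔ SimpleGraph.fromEdgeSet {s(v, w)})

/-- An edge `vw` is triangular if it lies in a 3-cycle; a graph is triangular if every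
edge is triangular. -/
def Triangular {V : Type*} (G : SimpleGraph V) : Prop :=
  ∀ v w, G.Adj v w → ∃ u, G.Adj v u ∧ G.Adj w u

/-- A graph is 3-connected if it has at least 4 vertices and deleting any set of at most
2 vertices leaves a connected graph. -/
def ThreeConnected {V : Type*} [Fintype V] (G : SimpleGraph V) : Prop :=
  4 ≤ Fintype.card V ∧ ∀ S : Set V, S.ncard ≤ 2 → (G.induce Sᶜ).Connected

/-- A graph is planar iff it has neither a `K₅` minor nor a `K₃,₃` minor
(Wagner's theorem, taken as the definition). -/
def IsPlanarW {V : Type*} (G : SimpleGraph V) : Prop :=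
  ¬ IsMinorOf (⊤ : SimpleGraph (Fin 5)) G ∧
  ¬ IsMinorOf (completeBipartiteGraph (Fin 3) (Fin 3)) G

/-- A graph is apex if deleting some vertex yields a planar graph. -/
def IsApex {V : Type*} (G : SimpleGraph V) : Prop :=
  ∃ v : V, IsPlanarW (G.induce {u | u ≠ v})

/-- A planar graph is maximal planar if adding any edge between nonadjacent vertices
yields a nonplanar graph. -/
def MaximalPlanar {V : Type*} (G : SimpleGraph V) : Prop :=
  IsPlanarW G ∧ ∀ v w : V, v ≠ w → ¬ G.Adj v w →
    ¬ IsPlanarW (G ⊔ SimpleGraph.fromEdgeSet {s(v, w)})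

/-- A connected branch set containing both a vertex satisfying `P` and one violating it has an edge
from the former kind to the latter. -/
lemma exists_adj_crossing {V : Type*} {G : SimpleGraph V} {s : Set V} (hs : (G.induce s).Connected)
    (P : V → Prop) {x y : V} (hx : x ∈ s) (hy : y ∈ s) (hPx : P x) (hPy : ¬ P y) :
    ∃ u ∈ s, ∃ v ∈ s, P u ∧ ¬ P v ∧ G.Adj u v := by
  obtain ⟨p⟩ := hs.preconnected ⟨x, hx⟩ ⟨y, hy⟩
  obtain ⟨d, -, h1, h2⟩ := p.exists_boundary_dart {z | P z.1} hPx hPy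
  exact ⟨d.fst, d.fst.2, d.snd, d.snd.2, h1, h2, d.adj⟩

/-- Disjoint sets indexed by `s`, each meeting the finite set `t`, number at most `t.card`. -/
lemma card_le_of_disjoint_meet {W V : Type*} {B : W → Set V}
    (hB : Pairwise fun w₁ w₂ => Disjoint (B w₁) (B w₂)) {s : Finset W} {t : Finset V}
    (h : ∀ w ∈ s, ∃ v ∈ B w, v ∈ t) : s.card ≤ t.card := by
  rcases s.eq_empty_or_nonempty with rfl | ⟨w, hw⟩
  · simp
  have : Nonempty V := ⟨(h w hw).choose⟩
  choose! f hf hft using h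
  refine Finset.card_le_card_of_injOn f hft fun w hw w' hw' hww => ?_
  by_contra hne
  exact Set.disjoint_left.mp (hB hne) (hf w hw) (hww ▸ hf w' hw')

/-- The join of the complete graph on `{9, 10}` with the square of the path `0, 1, …, 8`. -/
def joinPathSq : SimpleGraph (Fin 11) where
  Adj u v := u ≠ v ∧ (9 ≤ u.val ∨ 9 ≤ v.val ∨ (u.val ≤ v.val + 2 ∧ v.val ≤ u.val + 2))
  symm := ⟨fun u v h => ⟨h.1.symm, by have := h.2; omega⟩⟩
  loopless := ⟨fun _ h => h.1 rfl⟩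

instance : DecidableRel joinPathSq.Adj := fun u v =>
  inferInstanceAs (Decidable (u ≠ v ∧
    (9 ≤ u.val ∨ 9 ≤ v.val ∨ (u.val ≤ v.val + 2 ∧ v.val ≤ u.val + 2))))

lemma joinPathSq_compl_adj {u v : Fin 11} (h : joinPathSqᶜ.Adj u v) :
    u.val < 9 ∧ v.val < 9 ∧ (u.val + 3 ≤ v.val ∨ v.val + 3 ≤ u.val) := by
  obtain ⟨hne, h⟩ := (compl_adj _ _ _).mp h
  have h' : ¬ (9 ≤ u.val ∨ 9 ≤ v.val ∨ (u.val ≤ v.val + 2 ∧ v.val ≤ u.val + 2)) :=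
    fun h2 => h ⟨hne, h2⟩
  omega

theorem not_minor_joinPathSq : ¬ IsMinorOf (⊤ : SimpleGraph (Fin 6)) joinPathSq := by
  classical
  rintro ⟨B, hne, hdis, hconn, hadj⟩
  have hmax : ∀ w, ∃ x ∈ B w, ∀ y ∈ B w, y ≤ x := fun w =>
    Set.exists_max_image (B w) id (Set.toFinite _) (hne w)
  choose M hM hMle using hmax
  obtain ⟨w₀, hw₀⟩ := Finite.exists_min M
  have key : ∀ w ∈ Finset.univ.erase w₀, ∃ v ∈ B w, v ∈ (Finset.univ.filter
      fun v : Fin 11 => v.val = (M w₀).val + 1 ∨ v.val = (M w₀).val + 2 ∨ v = 9 ∨ v = 10) := by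
    intro w hw
    have hww : w₀ ≠ w := (Finset.ne_of_mem_erase hw).symm
    have hlt : M w₀ < M w := lt_of_le_of_ne (hw₀ w) fun h =>
      Set.disjoint_left.mp (hdis hww) (hM w₀) (h ▸ hM w)
    -- An edge climbing over the level `M w₀` and ending in `B w`.
    obtain ⟨u, v, hv, hu, huv, ha⟩ :
        ∃ u v, v ∈ B w ∧ u ≤ M w₀ ∧ M w₀ < v ∧ joinPathSq.Adj u v := by
      by_cases hlow : ∃ x ∈ B w, x ≤ M w₀
      · obtain ⟨x, hx, hxm⟩ := hlow
        obtain ⟨u, -, v, hv, h1, h2, h3⟩ :=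
          exists_adj_crossing (hconn w) (· ≤ M w₀) hx (hM w) hxm (not_le.mpr hlt)
        exact ⟨u, v, hv, h1, not_le.mp h2, h3⟩
      · push Not at hlow
        obtain ⟨u, hu, v, hv, h⟩ := hadj w₀ w hww
        exact ⟨u, v, hv, hMle w₀ u hu, hlow v hv, h⟩
    refine ⟨v, hv, ?_⟩
    have h2 := ha.2
    simp only [Finset.mem_filter, Finset.mem_univ, true_and, Fin.ext_iff, Fin.le_def,
      Fin.lt_def] at *
    have := v.isLt
    change _ ∨ _ ∨ v.val = 9 ∨ v.val = 10
    omega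
  have h5 := card_le_of_disjoint_meet hdis key
  have h4 : ∀ m : Fin 11, (Finset.univ.filter fun v : Fin 11 =>
      v.val = m.val + 1 ∨ v.val = m.val + 2 ∨ v = 9 ∨ v = 10).card ≤ 4 := by decide
  have h4' := h4 (M w₀)
  rw [Finset.card_erase_of_mem (Finset.mem_univ _), Finset.card_univ, Fintype.card_fin] at h5
  omega

theorem not_minor_joinPathSq_compl : ¬ IsMinorOf (⊤ : SimpleGraph (Fin 6)) joinPathSqᶜ := by
  classical
  rintro ⟨B, hne, hdis, hconn, hadj⟩
  have hlt : ∀ w, ∀ x ∈ B w, x.val < 9 := by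
    intro w x hx
    by_cases h : ∃ y ∈ B w, y ≠ x
    · obtain ⟨y, hy, hyx⟩ := h
      obtain ⟨u, -, v, -, rfl, -, ha⟩ := exists_adj_crossing (hconn w) (· = x) hx hy rfl hyx
      exact (joinPathSq_compl_adj ha).1
    · push Not at h
      obtain ⟨w', hw'⟩ := exists_ne w
      obtain ⟨u, hu, v, -, ha⟩ := hadj w w' hw'.symm
      exact h u hu ▸ (joinPathSq_compl_adj ha).1
  let F : Fin 6 → Finset (Fin 11) := fun w => Finset.univ.filter (· ∈ B w)
  have hF : ∀ w x, x ∈ F w ↔ x ∈ B w := by simp [F]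
  have hsum : ∑ w, (F w).card ≤ 9 := by
    rw [← Finset.card_biUnion]
    · refine (Finset.card_le_card (t := Finset.univ.filter fun x : Fin 11 => x.val < 9) ?_).trans
        (by decide)
      intro x hx
      obtain ⟨w, -, hw⟩ := Finset.mem_biUnion.mp hx
      simpa using hlt w x ((hF w x).mp hw)
    · intro w _ w' _ hww
      exact Finset.disjoint_left.mpr fun x hx hx' =>
        Set.disjoint_left.mp (hdis hww) ((hF w x).mp hx) ((hF w' x).mp hx')
  choose r hr using hne
  have hsing : ∀ w, (F w).card = 1 → ∀ x ∈ B w, x = r w := by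
    intro w hw x hx
    exact Finset.card_le_one.mp hw.le x ((hF w x).mpr hx) (r w) ((hF w _).mpr (hr w))
  have hdeg : ∀ w, (F w).card = 1 → (r w).val ≤ 1 ∨ 7 ≤ (r w).val := by
    intro w hw
    have h5 : (Finset.univ.erase w).card ≤
        (Finset.univ.filter fun v => joinPathSqᶜ.Adj (r w) v).card := by
      refine card_le_of_disjoint_meet hdis fun w' hw' => ?_
      obtain ⟨u, hu, v, hv, ha⟩ := hadj w w' (Finset.ne_of_mem_erase hw').symm
      exact ⟨v, hv, by simpa [hsing w hw u hu] using ha⟩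
    rw [Finset.card_erase_of_mem (Finset.mem_univ _), Finset.card_univ, Fintype.card_fin] at h5
    have hd : ∀ x : Fin 11, 6 - 1 ≤ (Finset.univ.filter fun v => joinPathSqᶜ.Adj x v).card →
        x.val ≤ 1 ∨ 7 ≤ x.val := by decide
    exact hd _ (by convert h5)
  have htwo : (Finset.univ.filter fun w => (F w).card = 1).card ≤ 2 := by
    refine Finset.card_le_card_of_injOn (t := (Finset.univ : Finset Bool))
      (fun w => decide ((r w).val ≤ 1)) (fun _ _ => Finset.mem_univ _) fun w hw w' hw' hww => ?_
    simp only [Finset.coe_filter, Finset.mem_univ, true_and, Set.mem_ofPred_eq] at hw hw'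
    by_contra hne'
    obtain ⟨u, hu, v, hv, ha⟩ := hadj w w' hne'
    obtain rfl := hsing w hw u hu
    obtain rfl := hsing w' hw' v hv
    have h1 := joinPathSq_compl_adj ha
    have h2 := hdeg w hw
    have h3 := hdeg w' hw'
    have h4 : (r w).val ≤ 1 ↔ (r w').val ≤ 1 := by simpa using hww
    omega
  have htwelve : ∑ _w : Fin 6, 2 ≤ ∑ w, ((F w).card + if (F w).card = 1 then 1 else 0) := by
    refine Finset.sum_le_sum fun w _ => ?_
    have : 0 < (F w).card := Finset.card_pos.mpr ⟨r w, (hF w _).mpr (hr w)⟩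
    split_ifs <;> omega
  rw [Finset.sum_add_distrib, ← Finset.card_filter] at htwelve
  simp only [Finset.sum_const, Finset.card_univ, Fintype.card_fin, smul_eq_mul] at htwelve
  omega

/-- There is a simple graph on 11 vertices such that neither it nor its complement has a
`K₆` minor. -/
theorem exists_order_eleven_bi_K6_minor_free :
    ∃ G : SimpleGraph (Fin 11),
      ¬ IsMinorOf (⊤ : SimpleGraph (Fin 6)) G ∧
      ¬ IsMinorOf (⊤ : SimpleGraph (Fin 6)) Gᶜ :=
  ⟨joinPathSq, not_minor_joinPathSq, not_minor_joinPathSq_compl⟩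
end

section
/- A graph of order 6 is maxnIL if and only if it is isomorphic to K6 minus an edge (the complete graph on 6 vertices with one edge deleted). -/
/-!
A ∇Y-move trades the three edges of a triangle for the three edges at the new vertex, so it
preserves the number of edges, and hence so does its inverse: every graph of the Petersen family
has as many edges as `K₆`, namely 15 (`card_edges_deltaYMove`,
`card_edges_of_inPetersenFamily`). A minor of `G` has at most as many edges as `G`
(`IsMinorOf.card_edges_le`). A graph of order 6 with 15 edges is complete, so a graph of order 6
is intrinsically linked exactly when it is complete (`isIL_iff_eq_top`). Hence `G` is maxnIL
exactly when it is not complete but becomes complete on adding any missing edge, that is, when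
exactly one edge is missing.
-/

open SimpleGraph

/-- `K₆` minus an edge. -/
def K6MinusEdge : SimpleGraph (Fin 6) :=
  (⊤ : SimpleGraph (Fin 6)).deleteEdges {s((0 : Fin 6), (1 : Fin 6))}

/-- The endpoints of an edge of `G` determine at most one pair of branch sets, so sending a vertex
to the index of its branch set maps the edges of `G` onto a set containing all edges of `H`. -/
theorem IsMinorOf.card_edges_le {W V : Type*} [Finite V] {H : SimpleGraph W}
    {G : SimpleGraph V} (h : IsMinorOf H G) : H.edgeSet.ncard ≤ G.edgeSet.ncard := by
  classical
  obtain ⟨B, -, hdisj, -, hadj⟩ := h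
  rcases isEmpty_or_nonempty W with hW | ⟨⟨w₀⟩⟩
  · simp [Set.eq_empty_of_isEmpty]
  let β : V → W := fun v => if h : ∃ w, v ∈ B w then h.choose else w₀
  have hβ : ∀ v w, v ∈ B w → β v = w := by
    intro v w hv
    have hex : ∃ w, v ∈ B w := ⟨w, hv⟩
    have hβv : β v = hex.choose := dif_pos hex
    rw [hβv]
    by_contra hne
    exact Set.disjoint_left.1 (hdisj hne) hex.choose_spec hv
  have hsub : H.edgeSet ⊆ Sym2.map β '' G.edgeSet := by
    intro x
    induction x with
    | _ w₁ w₂ =>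
      intro hx
      obtain ⟨v₁, h₁, v₂, h₂, hv⟩ := hadj w₁ w₂ hx
      exact ⟨s(v₁, v₂), hv, by simp [hβ _ _ h₁, hβ _ _ h₂]⟩
  exact (Set.ncard_le_ncard hsub (Set.toFinite _)).trans (Set.ncard_image_le (Set.toFinite _))

theorem edgeSet_deltaYMove {V : Type*} (G : SimpleGraph V) (a b c : V) :
    (deltaYMove G a b c).edgeSet =
      Sym2.map some '' (G.edgeSet \ {s(a, b), s(b, c), s(a, c)}) ∪
        {s(none, some a), s(none, some b), s(none, some c)} := by
  -- An edge has distinct endpoints, so it lies inside `{a, b, c}` only as one of the three pairs.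
  have hset : ∀ u v, G.Adj u v → ((u ∈ ({a, b, c} : Set V) ∧ v ∈ ({a, b, c} : Set V)) ↔
      s(u, v) ∈ ({s(a, b), s(b, c), s(a, c)} : Set (Sym2 V))) := by
    intro u v huv
    have := huv.ne
    simp only [Set.mem_insert_iff, Set.mem_singleton_iff, Sym2.eq_iff]
    grind
  have hmap : ∀ u v : V, ∀ S : Set (Sym2 V),
      s(some u, some v) ∈ Sym2.map some '' S ↔ s(u, v) ∈ S := by
    intro u v S
    rw [← Sym2.map_mk]
    exact (Sym2.map.injective (Option.some_injective V)).mem_set_image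
  have hnone : ∀ y : Option V, ∀ S : Set (Sym2 V), s(none, y) ∉ Sym2.map some '' S := by
    rintro y S ⟨z, -, hz⟩
    have : none ∈ Sym2.map some z := by rw [hz]; simp
    simp at this
  ext x
  induction x with
  | _ x y =>
    rw [mem_edgeSet, Set.mem_union]
    rcases x with _ | u <;> rcases y with _ | v
    · rw [or_iff_right (hnone _ _)]
      simp [deltaYMove]
    · rw [or_iff_right (hnone _ _)]
      simp [deltaYMove]
    · rw [adj_comm, Sym2.eq_swap (a := some u) (b := none), or_iff_right (hnone _ _)]
      simp [deltaYMove]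
    · have hadj : (deltaYMove G a b c).Adj (some u) (some v) ↔
          G.Adj u v ∧ ¬ (u ∈ ({a, b, c} : Set V) ∧ v ∈ ({a, b, c} : Set V)) := by
        simp only [deltaYMove, fromRel_adj, Option.some.injEq, reduceCtorEq, false_and, or_false]
        constructor
        · rintro ⟨-, ⟨_, _, rfl, rfl, h, h'⟩ | ⟨_, _, rfl, rfl, h, h'⟩⟩
          · exact ⟨h, h'⟩
          · exact ⟨h.symm, fun hT => h' hT.symm⟩
        · rintro ⟨h, h'⟩
          exact ⟨by simpa using h.ne, Or.inl ⟨u, v, rfl, rfl, h, h'⟩⟩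
      rw [hadj, or_iff_left (by simp), hmap, Set.mem_sdiff, mem_edgeSet]
      exact and_congr_right fun h => not_congr (hset u v h)

theorem card_edges_deltaYMove {V : Type*} [Finite V] (G : SimpleGraph V) {a b c : V}
    (hab : G.Adj a b) (hbc : G.Adj b c) (hac : G.Adj a c) :
    (deltaYMove G a b c).edgeSet.ncard = G.edgeSet.ncard := by
  have h₁ := hab.ne
  have h₂ := hbc.ne
  have h₃ := hac.ne
  have hT : ({s(a, b), s(b, c), s(a, c)} : Set (Sym2 V)).ncard = 3 :=
    Set.ncard_eq_three.2 ⟨_, _, _, by simp; grind, by simp; grind, by simp; grind, rfl⟩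
  have hY : ({s(none, some a), s(none, some b), s(none, some c)} :
      Set (Sym2 (Option V))).ncard = 3 :=
    Set.ncard_eq_three.2 ⟨_, _, _, by simp; grind, by simp; grind, by simp; grind, rfl⟩
  have hsub : ({s(a, b), s(b, c), s(a, c)} : Set (Sym2 V)) ⊆ G.edgeSet := by
    rintro x (rfl | rfl | rfl) <;> simpa
  have hdisj : Disjoint (Sym2.map some '' (G.edgeSet \ {s(a, b), s(b, c), s(a, c)}))
      {s(none, some a), s(none, some b), s(none, some c)} := by
    rw [Set.disjoint_left]
    rintro _ ⟨z, -, rfl⟩ hz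
    have hmem : none ∈ Sym2.map some z := by
      rcases hz with h | h | h <;> rw [h] <;> simp
    simp at hmem
  rw [edgeSet_deltaYMove G a b c, Set.ncard_union_eq hdisj (Set.toFinite _) (Set.toFinite _),
    Set.ncard_image_of_injective _ (Sym2.map.injective (Option.some_injective V)), hY, ← hT]
  exact Set.ncard_sdiff_add_ncard_of_subset hsub (Set.toFinite _)

theorem DeltaYStep.card_edges_eq {p q : FinGraph} (h : DeltaYStep p q) :
    q.2.edgeSet.ncard = p.2.edgeSet.ncard := by
  obtain ⟨a, b, c, hab, hbc, hac, ⟨e⟩⟩ := h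
  rw [← card_edges_deltaYMove p.2 hab hbc hac]
  exact Nat.card_congr e.mapEdgeSet

theorem card_edges_of_inPetersenFamily {p : FinGraph} (h : InPetersenFamily p) :
    p.2.edgeSet.ncard = 15 := by
  induction h with
  | refl =>
    change (⊤ : SimpleGraph (Fin 6)).edgeSet.ncard = 15
    rw [← coe_edgeFinset, Set.ncard_coe_finset, card_edgeFinset_top_eq_card_choose_two]
    rfl
  | tail _ hstep ih =>
    rcases hstep with hs | hs
    · rw [hs.card_edges_eq, ih]
    · rw [← hs.card_edges_eq, ih]

/-- In order 6, a Petersen family minor has 15 edges and so uses every possible edge; conversely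
the complete graph is `K₆` itself, which is its own minor with singleton branch sets. -/
theorem isIL_iff_eq_top {V : Type*} [Fintype V] (G : SimpleGraph V)
    (hcard : Fintype.card V = 6) : IsIL G ↔ G = ⊤ := by
  classical
  constructor
  · rintro ⟨p, hp, hminor⟩
    have hle := hminor.card_edges_le
    rw [card_edges_of_inPetersenFamily hp] at hle
    have htop : (⊤ : SimpleGraph V).edgeSet.ncard = 15 := by
      rw [← coe_edgeFinset, Set.ncard_coe_finset, card_edgeFinset_top_eq_card_choose_two, hcard]
      rfl
    rw [← edgeSet_inj]
    exact Set.eq_of_subset_of_ncard_le (edgeSet_mono le_top) (by rw [htop]; exact hle)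
      (Set.toFinite _)
  · rintro rfl
    obtain ⟨e⟩ : Nonempty (Fin 6 ≃ V) := ⟨(Fintype.equivFinOfCardEq hcard).symm⟩
    refine ⟨⟨6, ⊤⟩, Relation.ReflTransGen.refl, fun i => {e i}, fun i => by simp, ?_, ?_, ?_⟩
    · intro i j hij
      simpa using hij
    · intro i
      exact connected_iff _ |>.2 ⟨.of_subsingleton, inferInstance⟩
    · intro i j hij
      exact ⟨e i, rfl, e j, rfl, e.injective.ne hij.ne⟩

theorem sup_edge_eq_top_iff {V : Type*} (G : SimpleGraph V) (v w : V) :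
    G ⊔ fromEdgeSet {s(v, w)} = ⊤ ↔ ∀ x y, x ≠ y → G.Adj x y ∨ s(x, y) = s(v, w) := by
  rw [eq_top_iff]
  constructor
  · intro h x y hxy
    have := h hxy
    simp only [sup_adj, fromEdgeSet_adj, Set.mem_singleton_iff] at this
    tauto
  · intro h x y hxy
    simp only [sup_adj, fromEdgeSet_adj, Set.mem_singleton_iff]
    exact (h x y hxy).imp_right fun h => ⟨h, hxy⟩

theorem k6MinusEdge_adj (i j : Fin 6) :
    K6MinusEdge.Adj i j ↔ i ≠ j ∧ s(i, j) ≠ s(0, 1) := by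
  simp [K6MinusEdge]

/-- A graph of order 6 is maxnIL if and only if it is isomorphic to `K₆` minus an edge. -/
theorem maxnIL_order_six_iff {V : Type} [Fintype V] (G : SimpleGraph V)
    (hcard : Fintype.card V = 6) :
    MaxNIL G ↔ Nonempty (G ≃g K6MinusEdge) := by
  have hil := fun G' : SimpleGraph V => isIL_iff_eq_top G' hcard
  rw [MaxNIL, IsNIL, hil]
  simp only [hil, sup_edge_eq_top_iff]
  constructor
  · rintro ⟨hne, hmax⟩
    obtain ⟨v, w, hvw, hnadj⟩ : ∃ v w, v ≠ w ∧ ¬ G.Adj v w := by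
      by_contra! hall
      exact hne (eq_top_iff.2 fun v w hvw => hall v w hvw)
    have hall := hmax v w hvw hnadj
    -- Any labelling can be corrected by two transpositions to send the missing edge to `01`.
    obtain ⟨e, hv, hw⟩ : ∃ e : V ≃ Fin 6, e v = 0 ∧ e w = 1 := by
      let e₀ : V ≃ Fin 6 := Fintype.equivFinOfCardEq hcard
      let e₁ := e₀.trans (Equiv.swap (e₀ v) 0)
      have h₁ : e₁ v = 0 := by simp [e₁]
      have h₂ : (0 : Fin 6) ≠ e₁ w := h₁ ▸ e₁.injective.ne hvw
      refine ⟨e₁.trans (Equiv.swap (e₁ w) 1), ?_, by simp⟩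
      rw [Equiv.trans_apply, h₁, Equiv.swap_apply_of_ne_of_ne h₂ (by decide)]
    refine ⟨⟨e, fun {x y} => ?_⟩⟩
    have hedge : s(e x, e y) = s(0, 1) ↔ s(x, y) = s(v, w) := by
      rw [← hv, ← hw, ← Sym2.map_mk, ← Sym2.map_mk]
      exact (Sym2.map.injective e.injective).eq_iff
    rw [k6MinusEdge_adj, ne_eq, ne_eq, hedge, e.injective.eq_iff]
    constructor
    · rintro ⟨hxy, hs⟩
      exact (hall x y hxy).resolve_right hs
    · intro hxy
      refine ⟨hxy.ne, fun hs => hnadj ?_⟩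
      rwa [← mem_edgeSet, ← hs, mem_edgeSet]
  · rintro ⟨e⟩
    have hadj : ∀ x y, G.Adj x y ↔ x ≠ y ∧ s(e x, e y) ≠ s(0, 1) := by
      intro x y
      rw [← e.map_adj_iff, k6MinusEdge_adj, e.injective.ne_iff]
    constructor
    · rintro rfl
      have h := (hadj (e.symm 0) (e.symm 1)).1 (e.symm.injective.ne (by decide))
      simp at h
    · intro v w hvw hnadj x y hxy
      rw [hadj] at hnadj
      have hvw01 : s(e v, e w) = s(0, 1) := by
        by_contra h
        exact hnadj ⟨hvw, h⟩
      by_cases hxy01 : s(e x, e y) = s(0, 1)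
      · right
        rw [← hvw01, ← Sym2.map_mk, ← Sym2.map_mk] at hxy01
        exact Sym2.map.injective e.injective hxy01
      · exact Or.inl ((hadj x y).2 ⟨hxy, hxy01⟩)
end
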